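/- arXiv:1706.01419 — 2 statements merged into one kernel-verified Lean document; each statement's English description precedes it below -/
import Mathlib

section
/- Theorem 1. Let θ ∈ (0,1) and let (S_n) be a sequence of positive random variables satisfying: (i) E S_n = n^θ l(θ,n) + o(√(E S_n)); (ii) Var S_n / E S_n → σ² for some σ² > 0; (iii) S_n / E S_n → 1 almost surely; (iv) (S_n − E S_n)/√(Var S_n) converges weakly to the standard normal distribution N(0,1), where l(θ,·) is slowly varying at infinity. For each n let θ*_n be a solution of S_n = n^{θ*_n} l(θ*_n, n), and assume that (ln l(θ*_n, n) − ln l(θ, n)) / ((θ*_n − θ) ln n) → 0 in probability. Then ln n · √(S_n) · (θ*_n − θ) converges weakly to the normal distribution N(0, σ²) as n → ∞. -/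
open MeasureTheory ProbabilityTheory Filter Set Asymptotics

/-- `l : (0,∞) → (0,∞)` is slowly varying at infinity. -/
def SlowlyVaryingAtTop (l : ℝ → ℝ) : Prop :=
  ∀ lam : ℝ, 0 < lam → Tendsto (fun x : ℝ => l (lam * x) / l x) atTop (nhds 1)

/-!
Let `m n` and `v n` be the mean and the variance of `S n`. Since `S n ≥ 0`, the normalised variable
`(S n - m n) / √(v n)` is bounded below by `-m n / √(v n)`, and a Gaussian limit forces this bound
to `-∞`; as `v n / m n → σ²`, it follows that `m n → ∞`. Hence `m n` may be replaced by
`a n = n ^ θ * l θ n`: `(S n - a n) / √(a n) ⇒ N(0, σ²)`.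

The delta method at `1` for `f x = √x * log x`, where `f 1 = 0` and `f' 1 = 1`, absorbs the random
normalisation, because `√(a n) * f (S n / a n) = √(S n) * log (S n / a n)`. The equation defining
`θs n` reads `log (S n / a n) = log n * (θs n - θ) * (1 + l̃ n)`, and Slutsky's lemma removes the
factor `1 + l̃ n → 1`.
-/

open scoped Topology BoundedContinuousFunction

section ConvergenceInProbability

variable {ι Ω E F : Type*} [MeasurableSpace Ω] {P : Measure Ω} {u : Filter ι}

theorem tendstoInMeasure_const_of_tendsto [PseudoEMetricSpace E] {b : ι → E} {c : E}
    (hb : Tendsto b u (𝓝 c)) : TendstoInMeasure P (fun n _ => b n) u fun _ => c := by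
  intro ε hε
  refine tendsto_const_nhds.congr' ?_
  filter_upwards [hb.eventually (Metric.eball_mem_nhds c hε)] with n hn
  have hlt : edist (b n) c < ε := hn
  simp only [hlt.not_ge, ofPred_false, measure_empty]

theorem tendstoInMeasure_comp_of_continuousAt [PseudoEMetricSpace E] [PseudoEMetricSpace F]
    {X : ι → Ω → E} {c : E} {f : E → F} (hX : TendstoInMeasure P X u fun _ => c)
    (hf : ContinuousAt f c) : TendstoInMeasure P (fun n ω => f (X n ω)) u fun _ => f c := by
  intro ε hε
  obtain ⟨δ, hδ, hδε⟩ := EMetric.continuousAt_iff.1 hf ε hε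
  refine tendsto_of_tendsto_of_tendsto_of_le_of_le tendsto_const_nhds (hX δ hδ)
    (fun _ => zero_le) fun n => measure_mono fun ω hω => ?_
  by_contra hlt
  exact (hδε (not_le.1 hlt)).not_ge hω

end ConvergenceInProbability

section ConvergenceInDistribution

variable {ι Ω Ω' : Type*} [MeasurableSpace Ω] [MeasurableSpace Ω'] {P : Measure Ω}
  [IsProbabilityMeasure P] {P' : Measure Ω'} [IsProbabilityMeasure P'] {u : Filter ι}

theorem tendstoInDistribution_id_iff_forall_integral_tendsto {ν : Measure ℝ}
    [IsProbabilityMeasure ν] {X : ι → Ω → ℝ} (hX : ∀ n, AEMeasurable (X n) P) :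
    TendstoInDistribution X u id (fun _ => P) ν ↔
      ∀ g : ℝ →ᵇ ℝ, Tendsto (fun n => ∫ ω, g (X n ω) ∂P) u (𝓝 (∫ x, g x ∂ν)) := by
  have integral_comp (g : ℝ →ᵇ ℝ) (n : ι) : ∫ x, g x ∂P.map (X n) = ∫ ω, g (X n ω) ∂P :=
    integral_map (hX n) g.continuous.aestronglyMeasurable
  simp only [← integral_comp]
  refine ⟨fun h g => ?_, fun h => ⟨hX, aemeasurable_id, ?_⟩⟩
  · simpa using ProbabilityMeasure.tendsto_iff_forall_integral_tendsto.1 h.tendsto g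
  · refine ProbabilityMeasure.tendsto_iff_forall_integral_tendsto.2 fun g => ?_
    simpa using h g

theorem tendstoInDistribution_id_of_hasLaw {ν : Measure ℝ} [IsProbabilityMeasure ν]
    {X : ι → Ω → ℝ} {Z : Ω' → ℝ} (h : TendstoInDistribution X u Z (fun _ => P) P')
    (hZ : HasLaw Z ν P') : TendstoInDistribution X u id (fun _ => P) ν := by
  refine ⟨h.forall_aemeasurable, aemeasurable_id, ?_⟩
  simpa only [Measure.map_id, hZ.map_eq] using h.tendsto

theorem tendstoInMeasure_of_tendstoInDistribution_const {E : Type*} [PseudoEMetricSpace E]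
    [MeasurableSpace E] [OpensMeasurableSpace E] {X : ι → Ω → E} {c : E}
    (h : TendstoInDistribution X u (fun _ : Ω' => c) (fun _ => P) P') :
    TendstoInMeasure P X u fun _ => c := by
  intro ε hε
  have hclosed : IsClosed {x | ε ≤ edist x c} :=
    isClosed_le continuous_const (continuous_id.edist continuous_const)
  have hlimsup := ProbabilityMeasure.limsup_measure_closed_le_of_tendsto h.tendsto hclosed
  have hnull : P'.map (fun _ => c) {x | ε ≤ edist x c} = 0 := by
    simp [Measure.map_const, Measure.dirac_apply' c hclosed.measurableSet, hε.ne']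
  simp only [ProbabilityMeasure.coe_mk, hnull,
    fun n => Measure.map_apply_of_aemeasurable (h.forall_aemeasurable n) hclosed.measurableSet]
    at hlimsup
  exact tendsto_of_le_liminf_of_limsup_le zero_le hlimsup

/-- A lower bound `-b n` has to leave every half-line charged by the limit law. -/
theorem tendsto_atTop_of_tendstoInDistribution_of_neg_le {X : ι → Ω → ℝ} {Z : Ω' → ℝ} {b : ι → ℝ}
    (h : TendstoInDistribution X u Z (fun _ => P) P') (hZ : ∀ x, P'.map Z (Iio x) ≠ 0)
    (hb : ∀ᶠ n in u, ∀ᵐ ω ∂P, -b n ≤ X n ω) : Tendsto b u atTop := by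
  refine tendsto_atTop.2 fun C => ?_
  have hliminf := ProbabilityMeasure.le_liminf_measure_open_of_tendsto h.tendsto
    (isOpen_Iio (a := -C))
  have hcharged := eventually_lt_of_lt_liminf ((pos_iff_ne_zero.2 (hZ (-C))).trans_le hliminf)
  filter_upwards [hcharged, hb] with n hn hbn
  by_contra! hC
  refine hn.ne' ?_
  simp only [ProbabilityMeasure.coe_mk]
  rw [Measure.map_apply_of_aemeasurable (h.forall_aemeasurable n) measurableSet_Iio]
  refine measure_mono_null (fun ω hω => ?_) (ae_iff.1 hbn)
  simp only [mem_preimage, mem_Iio, mem_ofPred_eq] at hω ⊢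
  linarith

variable [u.IsCountablyGenerated]

theorem tendstoInDistribution_congr' {X Y : ι → Ω → ℝ} {Z : Ω' → ℝ}
    (h : TendstoInDistribution X u Z (fun _ => P) P') (hXY : ∀ᶠ n in u, X n =ᵐ[P] Y n)
    (hY : ∀ n, AEMeasurable (Y n) P) : TendstoInDistribution Y u Z (fun _ => P) P' := by
  refine tendstoInDistribution_of_tendstoInMeasure_sub Y Z h ?_ hY
  refine (tendstoInMeasure_const_of_tendsto tendsto_const_nhds).congr' (f := fun _ _ => 0) ?_
    EventuallyEq.rfl
  filter_upwards [hXY] with n hn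
  filter_upwards [hn] with ω hω
  simp [hω]

theorem tendstoInDistribution_mul {X A : ι → Ω → ℝ} {Z : Ω' → ℝ} {c : ℝ}
    (hX : TendstoInDistribution X u Z (fun _ => P) P') (hA : TendstoInMeasure P A u fun _ => c)
    (hA_meas : ∀ n, AEMeasurable (A n) P) :
    TendstoInDistribution (fun n ω => X n ω * A n ω) u (fun ω => Z ω * c) (fun _ => P) P' :=
  hX.continuous_comp_prodMk_of_tendstoInMeasure_const (g := fun x : ℝ × ℝ => x.1 * x.2)
    (by fun_prop) hA hA_meas

/-- Division by `A n` is only lost on the event `A n = 0`, whose probability tends to `0`. -/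
theorem tendstoInDistribution_of_mul {X A : ι → Ω → ℝ} {Z : Ω' → ℝ} {c : ℝ}
    (hXA : TendstoInDistribution (fun n ω => X n ω * A n ω) u Z (fun _ => P) P') (hc : c ≠ 0)
    (hA : TendstoInMeasure P A u fun _ => c) (hX_meas : ∀ n, AEMeasurable (X n) P)
    (hA_meas : ∀ n, AEMeasurable (A n) P) :
    TendstoInDistribution X u (fun ω => Z ω / c) (fun _ => P) P' := by
  have hinv := tendstoInMeasure_comp_of_continuousAt hA (continuousAt_inv₀ hc)
  refine tendstoInDistribution_of_tendstoInMeasure_sub X _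
    (tendstoInDistribution_mul hXA hinv fun n => (hA_meas n).inv) (fun ε hε => ?_) hX_meas
  refine tendsto_of_tendsto_of_tendsto_of_le_of_le tendsto_const_nhds
    (hA (edist 0 c) (edist_pos.2 hc.symm)) (fun _ => zero_le)
    fun n => measure_mono fun ω hω => ?_
  have hzero : A n ω = 0 := by
    by_contra hne
    refine hε.not_ge (hω.trans_eq ?_)
    simp [mul_inv_cancel_right₀ hne]
  simp [hzero]

theorem measurable_dslope {f : ℝ → ℝ} (hf : Measurable f) (p : ℝ) : Measurable (dslope f p) := by
  have hslope : Measurable (slope f p) := by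
    simp only [slope_fun_def_field]
    fun_prop
  refine hslope.measurable_of_countable_ne ((countable_singleton p).mono fun x hx => ?_)
  by_contra hne
  exact hx (dslope_of_ne f hne).symm

theorem tendstoInDistribution_delta_method {X : ι → Ω → ℝ} {Z : Ω' → ℝ} {b : ι → ℝ} {p f' : ℝ}
    {f : ℝ → ℝ} (hf : HasDerivAt f f' p) (hf_meas : Measurable f) (hb : Tendsto b u atTop)
    (hX_meas : ∀ n, AEMeasurable (X n) P)
    (hX : TendstoInDistribution (fun n ω => b n * (X n ω - p)) u Z (fun _ => P) P') :
    TendstoInDistribution (fun n ω => b n * (f (X n ω) - f p)) u (fun ω => Z ω * f')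
      (fun _ => P) P' := by
  have hsub : TendstoInMeasure P (fun n ω => X n ω - p) u fun _ => 0 := by
    have hscaled := tendstoInDistribution_mul hX
      (tendstoInMeasure_const_of_tendsto hb.inv_tendsto_atTop) fun _ => aemeasurable_const
    simp only [mul_zero] at hscaled
    refine (tendstoInMeasure_of_tendstoInDistribution_const hscaled).congr' ?_ EventuallyEq.rfl
    filter_upwards [hb.eventually_gt_atTop 0] with n hn
    filter_upwards with ω
    simp only [Pi.inv_apply]
    field_simp
  have hslope : TendstoInMeasure P (fun n ω => dslope f p (X n ω)) u fun _ => f' := by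
    have hcont : ContinuousAt (fun t => dslope f p (t + p)) 0 :=
      (continuousAt_dslope_same.2 hf.differentiableAt).comp_of_eq
        (continuousAt_id.add_const p) (zero_add p)
    simpa [hf.deriv] using tendstoInMeasure_comp_of_continuousAt hsub hcont
  refine (tendstoInDistribution_mul hX hslope fun n =>
    (measurable_dslope hf_meas p).comp_aemeasurable (hX_meas n)).congr
    (fun n => .of_forall fun ω => ?_) EventuallyEq.rfl
  simp only [mul_assoc, ← sub_smul_dslope f p (X n ω), smul_eq_mul]

end ConvergenceInDistribution

section GaussianLimits

variable {ι Ω : Type*} [MeasurableSpace Ω] {P : Measure Ω} [IsProbabilityMeasure P]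
  {u : Filter ι} {S : ι → Ω → ℝ} {m a v : ι → ℝ} {c : ℝ}

theorem tendsto_atTop_of_nonneg_of_gaussian_limit (hS : ∀ᶠ n in u, ∀ᵐ ω ∂P, 0 ≤ S n ω)
    (hc : 0 < c) (hv : Tendsto (fun n => v n / m n) u (𝓝 c))
    (hlim : TendstoInDistribution (fun n ω => (S n ω - m n) / √(v n)) u id (fun _ => P)
      (gaussianReal 0 1)) : Tendsto m u atTop := by
  have : (gaussianReal 0 1).IsOpenPosMeasure :=
    (gaussianReal_absolutelyContinuous' 0 one_ne_zero).isOpenPosMeasure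
  have hratio : Tendsto (fun n => m n / √(v n)) u atTop := by
    refine tendsto_atTop_of_tendstoInDistribution_of_neg_le hlim (fun x => ?_) ?_
    · simpa only [Measure.map_id] using isOpen_Iio.measure_ne_zero _ nonempty_Iio
    · filter_upwards [hS] with n hn
      filter_upwards [hn] with ω hω
      rw [← neg_div]
      gcongr
      linarith
  have hsqrt : Tendsto (fun n => √(m n)) u atTop := by
    refine (hratio.atTop_mul_pos (Real.sqrt_pos.2 hc) hv.sqrt).congr' ?_
    filter_upwards [hratio.eventually_gt_atTop 0] with n hn
    have hm : 0 < m n := pos_of_mul_pos_left hn (inv_nonneg.2 (Real.sqrt_nonneg _))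
    have hvn : √(v n) ≠ 0 := fun h0 => by simp [h0] at hn
    rw [Real.sqrt_div' _ hm.le, div_mul_div_cancel₀ hvn, Real.div_sqrt]
  exact Real.comap_sqrt_atTop ▸ tendsto_comap_iff.2 hsqrt

theorem isEquivalent_of_sub_isLittleO_sqrt (hm : Tendsto m u atTop)
    (hma : (fun n => m n - a n) =o[u] fun n => √(m n)) : a ~[u] m := by
  have hsqrt : (fun n => √(m n)) =o[u] m := by
    refine ((isLittleO_pow_pow_atTop_of_lt one_lt_two).comp_tendsto
      (Real.tendsto_sqrt_atTop.comp hm)).congr' (.of_forall fun n => pow_one _) ?_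
    filter_upwards [hm.eventually_ge_atTop 0] with n hn using Real.sq_sqrt hn
  exact ((hma.trans hsqrt).neg_left).congr_left fun n => neg_sub _ _

variable [u.IsCountablyGenerated]

theorem tendstoInDistribution_gaussian_mul {X : ι → Ω → ℝ} {b : ι → ℝ} (hc : 0 ≤ c)
    (hX : TendstoInDistribution X u id (fun _ => P) (gaussianReal 0 1))
    (hb : Tendsto b u (𝓝 √c)) :
    TendstoInDistribution (fun n ω => X n ω * b n) u id (fun _ => P)
      (gaussianReal 0 c.toNNReal) := by
  have hlaw : HasLaw (fun x : ℝ => id x * √c) (gaussianReal 0 c.toNNReal) (gaussianReal 0 1) := by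
    convert gaussianReal_mul_const (HasLaw.id (μ := gaussianReal 0 1)) (√c) using 2
    · simp
    · ext
      simp [Real.sq_sqrt hc, hc]
  exact tendstoInDistribution_id_of_hasLaw (tendstoInDistribution_mul hX
    (tendstoInMeasure_const_of_tendsto hb) fun _ => aemeasurable_const) hlaw

theorem tendstoInDistribution_gaussian_recenter (hS : ∀ n, AEMeasurable (S n) P) (hc : 0 < c)
    (hm : Tendsto m u atTop) (hv : Tendsto (fun n => v n / m n) u (𝓝 c))
    (hma : (fun n => m n - a n) =o[u] fun n => √(m n))
    (hlim : TendstoInDistribution (fun n ω => (S n ω - m n) / √(v n)) u id (fun _ => P)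
      (gaussianReal 0 1)) :
    TendstoInDistribution (fun n ω => (S n ω - a n) / √(a n)) u id (fun _ => P)
      (gaussianReal 0 c.toNNReal) := by
  have hequiv := isEquivalent_of_sub_isLittleO_sqrt hm hma
  have ha := hequiv.symm.tendsto_atTop hm
  have hm_div_a : Tendsto (fun n => m n / a n) u (𝓝 1) :=
    (isEquivalent_iff_tendsto_one (ha.eventually_ne_atTop 0)).1 hequiv.symm
  have hscale : Tendsto (fun n => √(v n / a n)) u (𝓝 √c) := by
    refine ((mul_one c ▸ hv.mul hm_div_a).congr' ?_).sqrt
    filter_upwards [hm.eventually_ne_atTop 0] with n hn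
    exact div_mul_div_cancel₀ hn
  have hshift : Tendsto (fun n => (m n - a n) / √(a n)) u (𝓝 0) := by
    refine (zero_mul √1 ▸ hma.tendsto_div_nhds_zero.mul hm_div_a.sqrt).congr' ?_
    filter_upwards [hm.eventually_gt_atTop 0, ha.eventually_gt_atTop 0] with n hmn han
    rw [Real.sqrt_div' _ han.le, div_mul_div_cancel₀ (Real.sqrt_pos.2 hmn).ne']
  have hsum := (tendstoInDistribution_gaussian_mul hc.le hlim hscale).add_of_tendstoInMeasure_const
    (tendstoInMeasure_const_of_tendsto hshift) fun _ => aemeasurable_const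
  simp only [add_zero] at hsum
  refine tendstoInDistribution_congr' hsum ?_ fun n => ((hS n).sub_const _).div_const _
  filter_upwards [hm.eventually_gt_atTop 0, ha.eventually_gt_atTop 0, hv.eventually_const_lt hc]
    with n hmn han hvmn
  have hvn : 0 < v n := (div_pos_iff_of_pos_right hmn).1 hvmn
  filter_upwards with ω
  simp only [Pi.add_apply]
  rw [Real.sqrt_div' _ han.le, div_mul_div_cancel₀ (Real.sqrt_pos.2 hvn).ne', ← add_div,
    sub_add_sub_cancel]

theorem hasDerivAt_sqrt_mul_log_one : HasDerivAt (fun x => √x * Real.log x) 1 1 := by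
  simpa using (Real.hasDerivAt_sqrt one_ne_zero).fun_mul (Real.hasDerivAt_log one_ne_zero)

theorem tendstoInDistribution_sqrt_mul_log_div {Ω' : Type*} [MeasurableSpace Ω'] {P' : Measure Ω'}
    [IsProbabilityMeasure P'] {Z : Ω' → ℝ} (hS : ∀ n, AEMeasurable (S n) P)
    (ha : Tendsto a u atTop)
    (hlim : TendstoInDistribution (fun n ω => (S n ω - a n) / √(a n)) u Z (fun _ => P) P') :
    TendstoInDistribution (fun n ω => √(S n ω) * Real.log (S n ω / a n)) u Z (fun _ => P) P' := by
  have hpos := ha.eventually_gt_atTop 0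
  have hdelta : TendstoInDistribution
      (fun n ω => √(a n) * (√(S n ω / a n) * Real.log (S n ω / a n) - √1 * Real.log 1)) u
      (fun ω => Z ω * 1) (fun _ => P) P' := by
    refine tendstoInDistribution_delta_method hasDerivAt_sqrt_mul_log_one (by fun_prop)
      (Real.tendsto_sqrt_atTop.comp ha) (fun n => (hS n).div_const _)
      (tendstoInDistribution_congr' hlim ?_ (by fun_prop))
    filter_upwards [hpos] with n hn
    filter_upwards with ω
    rw [div_sub_one hn.ne', mul_div_left_comm, Real.sqrt_div_self', mul_one_div]
  simp only [Real.log_one, mul_zero, sub_zero, mul_one] at hdelta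
  refine tendstoInDistribution_congr' hdelta ?_ (by fun_prop)
  filter_upwards [hpos] with n hn
  filter_upwards with ω
  rw [← mul_assoc, Real.sqrt_div' _ hn.le, mul_div_cancel₀ _ (Real.sqrt_pos.2 hn).ne']

end GaussianLimits

section ImplicitEstimator

/-- The relative error `l̃ = (ln L(ϑ) - ln L(θ)) / ((ϑ - θ) ln x)` made when the increment of
`ϑ ↦ ln (x ^ ϑ * L ϑ)` between `θ` and `ϑ` is replaced by `(ϑ - θ) ln x`. It is `0` at `ϑ = θ`. -/
noncomputable def relLogIncrement (L : ℝ → ℝ) (x θ ϑ : ℝ) : ℝ :=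
  (Real.log (L ϑ) - Real.log (L θ)) / ((ϑ - θ) * Real.log x)

theorem log_div_rpow_mul_eq {L : ℝ → ℝ} {x : ℝ} (hL : ∀ ϑ, 0 < L ϑ) (hx : 1 < x) (θ ϑ : ℝ) :
    Real.log (x ^ ϑ * L ϑ / (x ^ θ * L θ)) =
      Real.log x * (ϑ - θ) * (1 + relLogIncrement L x θ ϑ) := by
  have hx0 : 0 < x := one_pos.trans hx
  have hlog : Real.log x ≠ 0 := (Real.log_pos hx).ne'
  have log_model (η : ℝ) : Real.log (x ^ η * L η) = η * Real.log x + Real.log (L η) := by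
    rw [Real.log_mul (Real.rpow_pos_of_pos hx0 η).ne' (hL η).ne', Real.log_rpow hx0]
  have model_ne_zero (η : ℝ) : x ^ η * L η ≠ 0 :=
    (mul_pos (Real.rpow_pos_of_pos hx0 η) (hL η)).ne'
  rw [Real.log_div (model_ne_zero ϑ) (model_ne_zero θ), log_model, log_model, relLogIncrement]
  rcases eq_or_ne ϑ θ with rfl | hne
  · ring
  · have := sub_ne_zero.2 hne
    field_simp
    ring

variable {Ω : Type*} [MeasurableSpace Ω] {P : Measure Ω}

theorem aemeasurable_relLogIncrement {L : ℝ → ℝ} {x θ : ℝ} {s ϑ : Ω → ℝ} (hx : 0 < x)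
    (hs : AEMeasurable s P) (hϑ : AEMeasurable ϑ P) (hsol : ∀ ω, s ω = x ^ ϑ ω * L (ϑ ω)) :
    AEMeasurable (fun ω => relLogIncrement L x θ (ϑ ω)) P := by
  have hL (ω : Ω) : L (ϑ ω) = s ω / x ^ ϑ ω := by
    rw [hsol, mul_div_cancel_left₀ _ (Real.rpow_pos_of_pos hx _).ne']
  simp only [relLogIncrement, hL]
  fun_prop

theorem asymptotic_normality_implicit_estimator_general [IsProbabilityMeasure P] {θ σ2 : ℝ}
    {l : ℝ → ℝ → ℝ} (hl_pos : ∀ ϑ x : ℝ, 0 < x → 0 < l ϑ x) {S θs : ℕ → Ω → ℝ} {m v : ℕ → ℝ}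
    (hS : ∀ n, AEMeasurable (S n) P) (hθs : ∀ n, AEMeasurable (θs n) P)
    (hsol : ∀ n ω, S n ω = (n : ℝ) ^ θs n ω * l (θs n ω) n)
    (hm : (fun n : ℕ => m n - (n : ℝ) ^ θ * l θ n) =o[atTop] fun n => √(m n))
    (hσ2 : 0 < σ2) (hv : Tendsto (fun n => v n / m n) atTop (𝓝 σ2))
    (hlim : TendstoInDistribution (fun n ω => (S n ω - m n) / √(v n)) atTop id (fun _ => P)
      (gaussianReal 0 1))
    (hrel : TendstoInMeasure P (fun (n : ℕ) ω => relLogIncrement (l · n) n θ (θs n ω)) atTop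
      fun _ => 0) :
    TendstoInDistribution (fun (n : ℕ) ω => Real.log n * √(S n ω) * (θs n ω - θ)) atTop id
      (fun _ => P) (gaussianReal 0 σ2.toNNReal) := by
  have hS_nonneg : ∀ᶠ n in atTop, ∀ᵐ ω ∂P, 0 ≤ S n ω := by
    filter_upwards [eventually_gt_atTop 0] with n hn
    filter_upwards with ω
    have := hl_pos (θs n ω) n (by positivity)
    rw [hsol]
    positivity
  have hm_top := tendsto_atTop_of_nonneg_of_gaussian_limit hS_nonneg hσ2 hv hlim
  have ha_top := (isEquivalent_of_sub_isLittleO_sqrt hm_top hm).symm.tendsto_atTop hm_top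
  have hlog := tendstoInDistribution_sqrt_mul_log_div hS ha_top
    (tendstoInDistribution_gaussian_recenter hS hσ2 hm_top hv hm hlim)
  have hrel_meas (n : ℕ) : AEMeasurable (fun ω => relLogIncrement (l · n) n θ (θs n ω)) P := by
    rcases n.eq_zero_or_pos with rfl | hn
    · simp [relLogIncrement]
    · exact aemeasurable_relLogIncrement (by positivity) (hS n) (hθs n) (hsol n)
  have hfactor : TendstoInMeasure P
      (fun (n : ℕ) ω => 1 + relLogIncrement (l · n) n θ (θs n ω)) atTop fun _ => 1 := by
    simpa only [add_zero] using
      tendstoInMeasure_comp_of_continuousAt hrel (f := fun t : ℝ => 1 + t) (by fun_prop)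
  have hproduct : TendstoInDistribution
      (fun (n : ℕ) ω => Real.log n * √(S n ω) * (θs n ω - θ) *
        (1 + relLogIncrement (l · n) n θ (θs n ω))) atTop id (fun _ => P)
      (gaussianReal 0 σ2.toNNReal) := by
    refine tendstoInDistribution_congr' hlog ?_ (by fun_prop)
    filter_upwards [eventually_gt_atTop 1] with n hn
    filter_upwards with ω
    rw [hsol, log_div_rpow_mul_eq (fun ϑ => hl_pos ϑ n (by positivity)) (Nat.one_lt_cast.2 hn)]
    ring
  simpa only [div_one] using!
    tendstoInDistribution_of_mul hproduct one_ne_zero hfactor (by fun_prop) (by fun_prop)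

end ImplicitEstimator

/-- **Theorem 1.**  Suppose `E S_n = n^θ l(θ,n) + o(√(E S_n))`,
`Var S_n / E S_n → σ² > 0`, `S_n / E S_n → 1` a.s., and
`(S_n − E S_n)/√(Var S_n) ⇒ N(0,1)`, with `l(θ,·)` slowly varying.
If `θ*_n` solves `S_n = n^{θ*_n} l(θ*_n,n)` and
`(ln l(θ*_n,n) − ln l(θ,n))/((θ*_n − θ) ln n) → 0` in probability, then
`ln n · √S_n · (θ*_n − θ) ⇒ N(0,σ²)`. -/
theorem asymptotic_normality_implicit_estimator
    {Ω : Type*} [MeasurableSpace Ω] (P : Measure Ω) [IsProbabilityMeasure P]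
    (θ : ℝ) (hθ : θ ∈ Ioo (0:ℝ) 1)
    (l : ℝ → ℝ → ℝ)
    (hl_pos : ∀ ϑ x : ℝ, 0 < x → 0 < l ϑ x)
    (hl_sv : SlowlyVaryingAtTop (l θ))
    (S : ℕ → Ω → ℝ)
    (hS_meas : ∀ n, Measurable (S n))
    (hS_pos : ∀ n ω, 0 < S n ω)
    (hS_int : ∀ n, Integrable (S n) P)
    (ES VarS : ℕ → ℝ)
    (hES : ∀ n, ES n = ∫ ω, S n ω ∂P)
    (hVarS : ∀ n, VarS n = ∫ ω, (S n ω - ES n) ^ 2 ∂P)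
    -- (i)  E S_n = n^θ l(θ,n) + o(√(E S_n))
    (h_i : (fun n : ℕ => ES n - (n : ℝ) ^ θ * l θ n)
      =o[atTop] fun n : ℕ => Real.sqrt (ES n))
    (σ2 : ℝ) (hσ2 : 0 < σ2)
    -- (ii)  Var S_n / E S_n → σ²
    (h_ii : Tendsto (fun n : ℕ => VarS n / ES n) atTop (nhds σ2))
    -- (iii)  S_n / E S_n → 1  a.s.
    (h_iii : ∀ᵐ ω ∂P, Tendsto (fun n : ℕ => S n ω / ES n) atTop (nhds 1))
    -- (iv)  (S_n − E S_n)/√(Var S_n) ⇒ N(0,1)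
    (h_iv : ∀ g : BoundedContinuousFunction ℝ ℝ,
      Tendsto (fun n : ℕ =>
          ∫ ω, g ((S n ω - ES n) / Real.sqrt (VarS n)) ∂P) atTop
        (nhds (∫ x, g x ∂(gaussianReal 0 1))))
    (θs : ℕ → Ω → ℝ)
    (hθs_meas : ∀ n, Measurable (θs n))
    (hθs_sol : ∀ n ω, S n ω = (n : ℝ) ^ (θs n ω) * l (θs n ω) n)
    -- `l̃_n → 0` in probability
    (h_ltilde : TendstoInMeasure P
      (fun (n : ℕ) (ω : Ω) =>
        (Real.log (l (θs n ω) n) - Real.log (l θ n)) /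
          ((θs n ω - θ) * Real.log n))
      atTop (fun _ => (0 : ℝ))) :
    -- conclusion:  ln n · √S_n · (θ*_n − θ) ⇒ N(0, σ²)
    ∀ g : BoundedContinuousFunction ℝ ℝ,
      Tendsto (fun n : ℕ =>
          ∫ ω, g (Real.log n * Real.sqrt (S n ω) * (θs n ω - θ)) ∂P) atTop
        (nhds (∫ x, g x ∂(gaussianReal 0 (Real.toNNReal σ2)))) := by
  rw [← tendstoInDistribution_id_iff_forall_integral_tendsto (by fun_prop)] at h_iv ⊢
  exact asymptotic_normality_implicit_estimator_general hl_pos (by fun_prop) (by fun_prop) hθs_sol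
    h_i hσ2 h_ii h_iv h_ltilde
end

section
/- Lemma 2. Let θ ∈ (0,1), c > 0, and suppose the probabilities of the infinite urn scheme satisfy p_i = c i^{−1/θ} (1 + o(i^{−1/2})) as i → ∞, with p_1 ≥ p_2 ≥ … > 0 and Σ_i p_i = 1. Then the function α(x) = max{ j : p_j ≥ 1/x } satisfies α(x) = (c x)^θ + o(x^{θ/2}) as x → ∞. -/
open Filter Set Asymptotics

/-- `α(x) = max{ j ≥ 1 : p_j ≥ 1/x }`. -/
noncomputable def alphaFn (p : ℕ → ℝ) (x : ℝ) : ℕ :=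
  sSup {j : ℕ | 1 ≤ j ∧ 1 / x ≤ p j}

/-!
Write `p i = c * i ^ (-1/θ) * q i` with `q i = 1 + o(i ^ (-r))`. Inverting this relation gives
`(c / p i) ^ θ = i * q i ^ (-θ) = i + o(i ^ (1 - r))`, because `q ↦ q ^ (-θ)` is differentiable
at `1`. By maximality of `α = α(x)`, `p (α + 1) < 1 / x ≤ p α`, so `(c * x) ^ θ` lies between
`(c / p α) ^ θ` and `(c / p (α + 1)) ^ θ`; both are `α + o(α ^ (1 - r))` as soon as `r < 1`.
In particular `α` is asymptotic to `(c * x) ^ θ`, which turns the error into `o(x ^ (θ * (1 - r)))`.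
-/

open scoped Topology

section Asymptotics

variable {ι E : Type*} {l : Filter ι}

lemma isLittleO_of_le_of_le [Norm E] {f g h : ι → ℝ} {k : ι → E} (hg : g =o[l] k) (hh : h =o[l] k)
    (hgf : g ≤ᶠ[l] f) (hfh : f ≤ᶠ[l] h) : f =o[l] k := by
  refine (IsBigO.of_bound' ?_).trans_isLittleO (hg.abs_left.add hh.abs_left)
  filter_upwards [hgf, hfh] with i hgi hhi
  calc ‖f i‖ ≤ max |g i| |h i| := abs_le_max_abs_abs hgi hhi
    _ ≤ |g i| + |h i| := max_le_add_of_nonneg (abs_nonneg _) (abs_nonneg _)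
    _ ≤ ‖|g i| + |h i|‖ := Real.le_norm_self _

lemma isLittleO_rpow_sub_one [Norm E] {q : ι → ℝ} {k : ι → E} (hq : Tendsto q l (𝓝 1))
    (h : (fun i => q i - 1) =o[l] k) (s : ℝ) : (fun i => q i ^ s - 1) =o[l] k := by
  have hderiv : HasDerivAt (fun t : ℝ => t ^ s) (s * 1 ^ (s - 1)) 1 :=
    Real.hasDerivAt_rpow_const (Or.inl one_ne_zero)
  simpa only [Function.comp_def, Real.one_rpow] using
    (hderiv.isBigO_sub.comp_tendsto hq).trans_isLittleO h

lemma tendsto_one_of_isLittleO_natCast_rpow_neg {q : ℕ → ℝ} {r : ℝ} (hr : 0 ≤ r)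
    (hq : (fun i => q i - 1) =o[atTop] fun i : ℕ => (i : ℝ) ^ (-r)) : Tendsto q atTop (𝓝 1) := by
  have hbdd : (fun i : ℕ => (i : ℝ) ^ (-r)) =O[atTop] fun _ => (1 : ℝ) := by
    refine IsBigO.of_bound' ?_
    filter_upwards [eventually_ge_atTop 1] with i hi
    rw [Real.norm_of_nonneg (by positivity), norm_one]
    exact Real.rpow_le_one_of_one_le_of_nonpos (by exact_mod_cast hi) (neg_nonpos.2 hr)
  exact tendsto_sub_nhds_zero_iff.1 ((isLittleO_one_iff ℝ).1 (hq.trans_isBigO hbdd))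

lemma isLittleO_succ_sub_natCast {a : ℕ → ℝ} {s : ℝ} (hs : 0 < s)
    (ha : (fun n => a n - n) =o[atTop] fun n : ℕ => (n : ℝ) ^ s) :
    (fun n => a (n + 1) - n) =o[atTop] fun n : ℕ => (n : ℝ) ^ s := by
  have hnat : Tendsto (fun n : ℕ => (n : ℝ)) atTop atTop := tendsto_natCast_atTop_atTop
  have hsucc : (fun n : ℕ => ((n + 1 : ℕ) : ℝ)) =O[atTop] fun n : ℕ => (n : ℝ) := by
    simpa only [Nat.cast_succ] using
      (IsEquivalent.refl.add_const_of_norm_tendsto_atTop (c := (1 : ℝ))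
        (tendsto_norm_atTop_atTop.comp hnat)).isBigO
  have hshift : (fun n => a (n + 1) - (n + 1 : ℕ)) =o[atTop] fun n : ℕ => (n : ℝ) ^ s :=
    (ha.comp_tendsto (tendsto_add_atTop_nat 1)).trans_isBigO
      (hsucc.rpow hs.le (Eventually.of_forall fun n => n.cast_nonneg))
  have hone : (fun _ : ℕ => (1 : ℝ)) =o[atTop] fun n : ℕ => (n : ℝ) ^ s :=
    (isLittleO_one_left_iff ℝ).2
      (tendsto_norm_atTop_atTop.comp ((tendsto_rpow_atTop hs).comp hnat))
  refine (hshift.add hone).congr_left fun n => ?_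
  push_cast
  ring

end Asymptotics

section Counting

variable {p : ℕ → ℝ} {x : ℝ}

lemma bddAbove_setOf_one_div_le (hp : Tendsto p atTop (𝓝 0)) (hx : 0 < x) :
    BddAbove {j : ℕ | 1 ≤ j ∧ 1 / x ≤ p j} := by
  obtain ⟨N, hN⟩ := eventually_atTop.1 (hp.eventually (gt_mem_nhds (one_div_pos.2 hx)))
  exact ⟨N, fun j hj => le_of_not_gt fun hNj => (hN j hNj.le).not_ge hj.2⟩

lemma le_alphaFn (hp : Tendsto p atTop (𝓝 0)) (hx : 0 < x) {j : ℕ} (hj : 1 ≤ j)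
    (hjx : 1 / x ≤ p j) : j ≤ alphaFn p x :=
  le_csSup (bddAbove_setOf_one_div_le hp hx) ⟨hj, hjx⟩

lemma one_div_le_apply_alphaFn (hp : Tendsto p atTop (𝓝 0)) (hx : 0 < x)
    (hα : alphaFn p x ≠ 0) : 1 / x ≤ p (alphaFn p x) := by
  have hne : {j : ℕ | 1 ≤ j ∧ 1 / x ≤ p j}.Nonempty := by
    contrapose! hα
    rw [alphaFn, hα, csSup_empty, Nat.bot_eq_zero]
  exact (Nat.sSup_mem hne (bddAbove_setOf_one_div_le hp hx)).2

lemma apply_alphaFn_add_one_lt (hp : Tendsto p atTop (𝓝 0)) (hx : 0 < x) :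
    p (alphaFn p x + 1) < 1 / x :=
  lt_of_not_ge fun h => (le_alphaFn hp hx (Nat.le_add_left 1 _) h).not_gt (Nat.lt_succ_self _)

lemma tendsto_alphaFn_atTop (hp_pos : ∀ᶠ i in atTop, 0 < p i) (hp : Tendsto p atTop (𝓝 0)) :
    Tendsto (alphaFn p) atTop atTop := by
  refine tendsto_atTop.2 fun n => ?_
  obtain ⟨m, hm_pos, hnm, hm⟩ :=
    (hp_pos.and ((eventually_ge_atTop n).and (eventually_ge_atTop 1))).exists
  filter_upwards [eventually_ge_atTop (1 / p m)] with x hx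
  have hx_pos : 0 < x := (one_div_pos.2 hm_pos).trans_le hx
  exact hnm.trans (le_alphaFn hp hx_pos hm ((one_div_le hx_pos hm_pos).2 hx))

lemma eventually_mul_rpow_mem_Icc_alphaFn {c θ : ℝ} (hc : 0 ≤ c) (hθ : 0 ≤ θ)
    (hp_pos : ∀ᶠ i in atTop, 0 < p i) (hp : Tendsto p atTop (𝓝 0)) :
    ∀ᶠ x in atTop, (c * x) ^ θ ∈
      Icc ((c / p (alphaFn p x)) ^ θ) ((c / p (alphaFn p x + 1)) ^ θ) := by
  have hα := tendsto_alphaFn_atTop hp_pos hp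
  filter_upwards [eventually_gt_atTop 0, hα.eventually_ne_atTop 0, hα.eventually hp_pos,
    ((tendsto_add_atTop_nat 1).comp hα).eventually hp_pos] with x hx hα_ne hpα hpα'
  have hle : (p (alphaFn p x))⁻¹ ≤ x := by
    simpa using inv_anti₀ (one_div_pos.2 hx) (one_div_le_apply_alphaFn hp hx hα_ne)
  have hge : x ≤ (p (alphaFn p x + 1))⁻¹ := by
    simpa using inv_anti₀ hpα' (apply_alphaFn_add_one_lt hp hx).le
  simp only [div_eq_mul_inv]
  constructor <;> gcongr

lemma isLittleO_mul_rpow_sub_alphaFn {c θ s : ℝ} (hc : 0 ≤ c) (hθ : 0 ≤ θ) (hs : 0 < s)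
    (hp_pos : ∀ᶠ i in atTop, 0 < p i) (hp : Tendsto p atTop (𝓝 0))
    (hinv : (fun i : ℕ => (c / p i) ^ θ - i) =o[atTop] fun i : ℕ => (i : ℝ) ^ s) :
    (fun x => (c * x) ^ θ - alphaFn p x) =o[atTop] fun x => (alphaFn p x : ℝ) ^ s := by
  have hα := tendsto_alphaFn_atTop hp_pos hp
  have hbounds := eventually_mul_rpow_mem_Icc_alphaFn hc hθ hp_pos hp
  exact isLittleO_of_le_of_le (hinv.comp_tendsto hα)
    ((isLittleO_succ_sub_natCast hs hinv).comp_tendsto hα)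
    (hbounds.mono fun x hx => sub_le_sub_right hx.1 _)
    (hbounds.mono fun x hx => sub_le_sub_right hx.2 _)

end Counting

section Zipf

variable {p : ℕ → ℝ} {c θ r : ℝ}

lemma tendsto_zipf_zero (c : ℝ) (hθ : 0 < θ) :
    Tendsto (fun i : ℕ => c * (i : ℝ) ^ (-(1 / θ))) atTop (𝓝 0) := by
  simpa only [mul_zero, Function.comp_def] using ((tendsto_rpow_neg_atTop (one_div_pos.2 hθ)).comp
    tendsto_natCast_atTop_atTop).const_mul c

lemma eventually_zipf_pos (hc : 0 < c) (θ : ℝ) :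
    ∀ᶠ i : ℕ in atTop, 0 < c * (i : ℝ) ^ (-(1 / θ)) := by
  filter_upwards [eventually_gt_atTop 0] with i hi
  positivity

lemma div_rpow_eq_mul_div_zipf_rpow_neg {P j : ℝ} (hP : 0 ≤ P) (hc : 0 < c) (hθ : θ ≠ 0)
    (hj : 0 < j) : (c / P) ^ θ = j * (P / (c * j ^ (-(1 / θ)))) ^ (-θ) := by
  have hratio : (P / (c * j ^ (-(1 / θ))))⁻¹ = c / P * j ^ (-(1 / θ)) := by
    rw [inv_div]
    ring
  have hj_rpow : (j ^ (-(1 / θ))) ^ θ = j⁻¹ := by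
    rw [← Real.rpow_mul hj.le, neg_mul, one_div_mul_cancel hθ, Real.rpow_neg_one]
  rw [Real.rpow_neg (by positivity), ← Real.inv_rpow (by positivity), hratio,
    Real.mul_rpow (by positivity) (by positivity), hj_rpow]
  field_simp

lemma isLittleO_div_rpow_sub_natCast (hc : 0 < c) (hθ : θ ≠ 0) (hr : 0 ≤ r)
    (hp_pos : ∀ᶠ i in atTop, 0 < p i)
    (hp : (fun i : ℕ => p i / (c * (i : ℝ) ^ (-(1 / θ))) - 1)
      =o[atTop] fun i : ℕ => (i : ℝ) ^ (-r)) :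
    (fun i : ℕ => (c / p i) ^ θ - i) =o[atTop] fun i : ℕ => (i : ℝ) ^ (1 - r) := by
  have hratio := isLittleO_rpow_sub_one (tendsto_one_of_isLittleO_natCast_rpow_neg hr hp) hp (-θ)
  refine ((isBigO_refl (fun i : ℕ => (i : ℝ)) atTop).mul_isLittleO hratio).congr' ?_ ?_
  · filter_upwards [hp_pos, eventually_gt_atTop 0] with i hpi hi
    rw [div_rpow_eq_mul_div_zipf_rpow_neg hpi.le hc hθ (Nat.cast_pos.2 hi)]
    ring
  · filter_upwards [eventually_gt_atTop 0] with i hi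
    rw [sub_eq_add_neg, Real.rpow_add (Nat.cast_pos.2 hi), Real.rpow_one]

end Zipf

lemma isBigO_rpow_of_isLittleO_mul_rpow_sub {a : ℝ → ℝ} {c θ s : ℝ} (hc : 0 ≤ c)
    (hs₀ : 0 ≤ s) (hs₁ : s ≤ 1) (ha : Tendsto a atTop atTop)
    (h : (fun x => (c * x) ^ θ - a x) =o[atTop] fun x => a x ^ s) :
    (fun x => a x ^ s) =O[atTop] fun x => x ^ (θ * s) := by
  have hpow : (fun x => a x ^ s) =O[atTop] a := by
    refine IsBigO.of_bound' ?_
    filter_upwards [ha.eventually_ge_atTop 1] with x hx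
    rw [Real.norm_of_nonneg (by positivity), Real.norm_of_nonneg (by positivity)]
    exact Real.rpow_le_self_of_one_le hx hs₁
  have hequiv : (fun x => (c * x) ^ θ) ~[atTop] a := (h.trans_isBigO hpow).isEquivalent
  have hscale : (fun x => (c * x) ^ θ) =O[atTop] fun x : ℝ => x ^ θ := by
    refine (isBigO_const_mul_self (c ^ θ) (fun x : ℝ => x ^ θ) atTop).congr' ?_ .rfl
    filter_upwards [eventually_ge_atTop 0] with x hx using (Real.mul_rpow hc hx).symm
  have hnonneg : ∀ᶠ x : ℝ in atTop, 0 ≤ x ^ θ :=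
    (eventually_ge_atTop 0).mono fun x hx => Real.rpow_nonneg hx θ
  refine ((hequiv.isBigO_symm.trans hscale).rpow hs₀ hnonneg).congr' .rfl ?_
  filter_upwards [eventually_ge_atTop 0] with x hx using (Real.rpow_mul hx θ s).symm

theorem alpha_asymptotics_of_zipf_general {p : ℕ → ℝ} {θ c r : ℝ} (hθ : 0 < θ) (hc : 0 < c)
    (hr : r ∈ Ico (0 : ℝ) 1)
    (hp : (fun i : ℕ => p i / (c * (i : ℝ) ^ (-(1 / θ))) - 1)
      =o[atTop] fun i : ℕ => (i : ℝ) ^ (-r)) :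
    (fun x : ℝ => (alphaFn p x : ℝ) - (c * x) ^ θ)
      =o[atTop] fun x : ℝ => x ^ (θ * (1 - r)) := by
  have hs : 0 < 1 - r := sub_pos.2 hr.2
  have hzipf : p ~[atTop] fun i : ℕ => c * (i : ℝ) ^ (-(1 / θ)) :=
    isEquivalent_of_tendsto_one (tendsto_one_of_isLittleO_natCast_rpow_neg hr.1 hp)
  have hp_pos : ∀ᶠ i in atTop, 0 < p i := hzipf.eventually_pos (eventually_zipf_pos hc θ)
  have hp_zero : Tendsto p atTop (𝓝 0) := hzipf.symm.tendsto_nhds (tendsto_zipf_zero c hθ)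
  have hα : Tendsto (fun x => (alphaFn p x : ℝ)) atTop atTop :=
    tendsto_natCast_atTop_atTop.comp (tendsto_alphaFn_atTop hp_pos hp_zero)
  have herror := isLittleO_mul_rpow_sub_alphaFn hc.le hθ.le hs hp_pos hp_zero
    (isLittleO_div_rpow_sub_natCast hc hθ.ne' hr.1 hp_pos hp)
  refine (herror.trans_isBigO ?_).symm
  exact isBigO_rpow_of_isLittleO_mul_rpow_sub hc.le hs.le (sub_le_self 1 hr.1) hα herror

/-- **Lemma 2.**  If `p_i = c i^{−1/θ} (1 + o(i^{−1/2}))` as `i → ∞`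
(with `p_1 ≥ p_2 ≥ … > 0`, `Σ p_i = 1`), then
`α(x) = (c x)^θ + o(x^{θ/2})` as `x → ∞`. -/
theorem alpha_asymptotics_of_zipf
    (p : ℕ → ℝ)
    (hp_pos : ∀ i, 1 ≤ i → 0 < p i)
    (hp_mono : ∀ i, 1 ≤ i → p (i + 1) ≤ p i)
    (hp_sum : (∑' i : ℕ, p (i + 1)) = 1)
    (θ c : ℝ) (hθ : θ ∈ Ioo (0:ℝ) 1) (hc : 0 < c)
    -- `p_i = c i^{−1/θ} (1 + o(i^{−1/2}))`
    (hp : (fun i : ℕ => p i / (c * (i : ℝ) ^ (-(1 / θ))) - 1)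
      =o[atTop] fun i : ℕ => (i : ℝ) ^ (-(1 / 2) : ℝ)) :
    (fun x : ℝ => (alphaFn p x : ℝ) - (c * x) ^ θ)
      =o[atTop] fun x : ℝ => x ^ (θ / 2) := by
  convert alpha_asymptotics_of_zipf_general hθ.1 hc (by norm_num : (1 / 2 : ℝ) ∈ Ico 0 1) hp using 3
  ring
end
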